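/- Let S be an ordered semigroup with real multiplication satisfying axioms O1–O6. If f', f, g₁, g₂ ∈ S are such that f' ≪ f ≤ g₁ + g₂, then there exist h₁, h₂ ∈ S such that f' ≪ h₁ + h₂ ≪ f, h₁ ≤ g₁, and h₂ ≤ g₂. -/

import Mathlib

open scoped ENNReal

/-- `CC s t` : `s` is (sequentially) compactly contained in `t`, written `s ≪ t`. -/
def CC {S : Type*} [AddCommMonoid S] [PartialOrder S] (s t : S) : Prop :=
  ∀ u : ℕ → S, Monotone u → ∀ x : S, IsLUB (Set.range u) x → t ≤ x → ∃ n, s ≤ u n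

/-- An ordered semigroup (positive, with translation invariant order) satisfying axioms O1-O5. -/
structure CuO5 (S : Type*) [AddCommMonoid S] [PartialOrder S] : Prop where
  addRightMono : ∀ {s t : S}, s ≤ t → ∀ r : S, s + r ≤ t + r
  zeroLe : ∀ s : S, 0 ≤ s
  O1 : ∀ u : ℕ → S, Monotone u → ∃ x : S, IsLUB (Set.range u) x
  O2 : ∀ s : S, ∃ u : ℕ → S, (∀ n, CC (u n) (u (n + 1))) ∧ IsLUB (Set.range u) s
  O3 : ∀ {s₁ t₁ s₂ t₂ : S}, CC s₁ t₁ → CC s₂ t₂ → CC (s₁ + s₂) (t₁ + t₂)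
  O4 : ∀ u v : ℕ → S, Monotone u → Monotone v → ∀ x y : S,
    IsLUB (Set.range u) x → IsLUB (Set.range v) y →
    IsLUB (Set.range fun n => u n + v n) (x + y)
  O5 : ∀ {s' s t : S}, CC s' s → s ≤ t → ∃ r : S, s' + r ≤ t ∧ t ≤ s + r

/-- Axioms O1-O6. -/
structure CuO6 (S : Type*) [AddCommMonoid S] [PartialOrder S] extends CuO5 S : Prop where
  O6 : ∀ {s r t : S}, s ≤ r + t → ∀ {s' : S}, CC s' s →
    ∃ r' t' : S, s' ≤ r' + t' ∧ r' ≤ r ∧ r' ≤ s ∧ t' ≤ t ∧ t' ≤ s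

/-- A functional on `S`: additive, order preserving, zero preserving map to `[0,∞]`
preserving suprema of increasing sequences. -/
structure IsFunctional {S : Type*} [AddCommMonoid S] [PartialOrder S] (l : S → ℝ≥0∞) : Prop where
  map_zero : l 0 = 0
  map_add : ∀ s t : S, l (s + t) = l s + l t
  mono : ∀ {s t : S}, s ≤ t → l s ≤ l t
  map_sup : ∀ u : ℕ → S, Monotone u → ∀ x : S, IsLUB (Set.range u) x → l x = ⨆ n, l (u n)

/-- Real multiplication on `S` : a map `(0,∞] × S → S` additive, order preserving and
sup-(of increasing sequences)-preserving in each variable, with `1 · s = s`.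
Scalars are elements of `ℝ≥0∞` required to be positive. -/
structure RealMul (S : Type*) [AddCommMonoid S] [PartialOrder S] where
  smul : ℝ≥0∞ → S → S
  add_left : ∀ {a b : ℝ≥0∞}, 0 < a → 0 < b → ∀ s : S, smul (a + b) s = smul a s + smul b s
  add_right : ∀ {a : ℝ≥0∞}, 0 < a → ∀ s t : S, smul a (s + t) = smul a s + smul a t
  mono_left : ∀ {a b : ℝ≥0∞}, 0 < a → a ≤ b → ∀ s : S, smul a s ≤ smul b s
  mono_right : ∀ {a : ℝ≥0∞}, 0 < a → ∀ {s t : S}, s ≤ t → smul a s ≤ smul a t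
  sup_left : ∀ u : ℕ → ℝ≥0∞, Monotone u → 0 < u 0 → ∀ s : S,
    IsLUB (Set.range fun n => smul (u n) s) (smul (⨆ n, u n) s)
  sup_right : ∀ {a : ℝ≥0∞}, 0 < a → ∀ u : ℕ → S, Monotone u → ∀ x : S,
    IsLUB (Set.range u) x → IsLUB (Set.range fun n => smul a (u n)) (smul a x)
  one_smul : ∀ s : S, smul 1 s = s

/-- `D` is a dense subset of `S`: every element of `S` is the supremum of a rapidly
increasing sequence of elements of `D`. -/
def IsDenseSub {S : Type*} [AddCommMonoid S] [PartialOrder S] (D : Set S) : Prop :=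
  ∀ s : S, ∃ u : ℕ → S, (∀ n, u n ∈ D) ∧ (∀ n, CC (u n) (u (n + 1))) ∧ IsLUB (Set.range u) s

/-- `m` is the least upper bound of the functionals `l₁` and `l₂` in `F(S)`
(pointwise order). -/
def IsFSup {S : Type*} [AddCommMonoid S] [PartialOrder S] (l₁ l₂ m : S → ℝ≥0∞) : Prop :=
  IsFunctional m ∧ (∀ s, l₁ s ≤ m s) ∧ (∀ s, l₂ s ≤ m s) ∧
    ∀ d : S → ℝ≥0∞, IsFunctional d → (∀ s, l₁ s ≤ d s) → (∀ s, l₂ s ≤ d s) → ∀ s, m s ≤ d s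

/-- `m` is the greatest lower bound of the functionals `l₁` and `l₂` in `F(S)`
(pointwise order). -/
def IsFInf {S : Type*} [AddCommMonoid S] [PartialOrder S] (l₁ l₂ m : S → ℝ≥0∞) : Prop :=
  IsFunctional m ∧ (∀ s, m s ≤ l₁ s) ∧ (∀ s, m s ≤ l₂ s) ∧
    ∀ d : S → ℝ≥0∞, IsFunctional d → (∀ s, d s ≤ l₁ s) → (∀ s, d s ≤ l₂ s) → ∀ s, d s ≤ m s

/-- An isomorphism of ordered semigroups between `S` and the extended natural numbers. -/
def IsOrdSemigroupIso {S : Type*} [AddCommMonoid S] [PartialOrder S] (e : S ≃ ℕ∞) : Prop :=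
  (∀ a b : S, e (a + b) = e a + e b) ∧ e 0 = 0 ∧ ∀ a b : S, a ≤ b ↔ e a ≤ e b

section CompactContainment

variable {S : Type*} [AddCommMonoid S] [PartialOrder S]

lemma CC.trans_le {a b c : S} (h : CC a b) (hbc : b ≤ c) : CC a c :=
  fun u hu x hx hcx => h u hu x hx (hbc.trans hcx)

lemma CC.of_le {a b c : S} (hab : a ≤ b) (h : CC b c) : CC a c := fun u hu x hx hcx => by
  obtain ⟨n, hn⟩ := h u hu x hx hcx
  exact ⟨n, hab.trans hn⟩

lemma CC.le {a b : S} (h : CC a b) : a ≤ b := by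
  obtain ⟨n, hn⟩ := h (fun _ => b) monotone_const b (by simp) le_rfl
  exact hn

lemma monotone_of_forall_CC {u : ℕ → S} (hu : ∀ n, CC (u n) (u (n + 1))) : Monotone u :=
  monotone_nat_of_le_succ fun n => (hu n).le

namespace CuO5

lemma exists_rapid_above (hS : CuO5 S) {a b : S} (h : CC a b) :
    ∃ u : ℕ → S, a ≤ u 0 ∧ (∀ n, CC (u n) (u (n + 1))) ∧ ∀ n, CC (u n) b := by
  obtain ⟨u, hu, hlub⟩ := hS.O2 b
  obtain ⟨k, hk⟩ := h u (monotone_of_forall_CC hu) b hlub le_rfl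
  refine ⟨fun n => u (k + n), hk, fun n => hu (k + n), fun n => ?_⟩
  exact (hu (k + n)).trans_le (hlub.1 ⟨_, rfl⟩)

lemma exists_between (hS : CuO5 S) {a b : S} (h : CC a b) : ∃ m, CC a m ∧ CC m b := by
  obtain ⟨u, h0, hu, hub⟩ := hS.exists_rapid_above h
  exact ⟨u 1, CC.of_le h0 (hu 0), hub 1⟩

lemma exists_le_add_of_CC (hS : CuO5 S) {s x y : S} (h : CC s (x + y)) :
    ∃ x' y', CC x' x ∧ CC y' y ∧ s ≤ x' + y' := by
  obtain ⟨u, hu, hux⟩ := hS.O2 x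
  obtain ⟨v, hv, hvy⟩ := hS.O2 y
  have mu := monotone_of_forall_CC hu
  have mv := monotone_of_forall_CC hv
  have add_le {a b c d : S} (h₁ : a ≤ b) (h₂ : c ≤ d) : a + c ≤ b + d :=
    (hS.addRightMono h₁ c).trans (by
      rw [add_comm b c, add_comm b d]
      exact hS.addRightMono h₂ b)
  obtain ⟨n, hn⟩ := h (fun n => u n + v n) (fun i j hij => add_le (mu hij) (mv hij)) _
    (hS.O4 u v mu mv x y hux hvy) le_rfl
  exact ⟨u n, v n, (hu n).trans_le (hux.1 ⟨_, rfl⟩), (hv n).trans_le (hvy.1 ⟨_, rfl⟩), hn⟩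

lemma CC_sum (hS : CuO5 S) {u v : ℕ → S} (h : ∀ n, CC (u n) (v n)) (N : ℕ) :
    CC (∑ i ∈ Finset.range N, u i) (∑ i ∈ Finset.range N, v i) := by
  induction N with
  | zero =>
    rw [Finset.sum_range_zero, Finset.sum_range_zero]
    exact fun w _ x _ _ => ⟨0, hS.zeroLe (w 0)⟩
  | succ N ih =>
    rw [Finset.sum_range_succ, Finset.sum_range_succ]
    exact hS.O3 ih (h N)

end CuO5

end CompactContainment

namespace RealMul

variable {S : Type*} [AddCommMonoid S] [PartialOrder S]

lemma smul_nsmul_succ (rm : RealMul S) {a : ℝ≥0∞} (ha : 0 < a) (n : ℕ) (s : S) :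
    rm.smul a ((n + 1) • s) = (n + 1) • rm.smul a s := by
  induction n with
  | zero => simp
  | succ n ih => rw [succ_nsmul, rm.add_right ha, ih, ← succ_nsmul]

lemma natCast_succ_mul_smul (rm : RealMul S) {a : ℝ≥0∞} (ha : 0 < a) (n : ℕ) (s : S) :
    rm.smul (((n + 1 : ℕ) : ℝ≥0∞) * a) s = (n + 1) • rm.smul a s := by
  induction n with
  | zero => simp
  | succ n ih =>
    have hpos : 0 < ((n + 1 : ℕ) : ℝ≥0∞) * a := ENNReal.mul_pos (by simp) ha.ne'
    rw [Nat.cast_succ (n + 1), add_mul, one_mul, rm.add_left hpos ha, ih, ← succ_nsmul]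

lemma smul_zero_of_ne_top (rm : RealMul S) (hS : CuO5 S) {a : ℝ≥0∞} (ha : 0 < a) (ha' : a ≠ ⊤) :
    rm.smul a 0 = 0 := by
  obtain ⟨n, hn⟩ := ENNReal.exists_nat_gt ha'
  refine le_antisymm ?_ (hS.zeroLe _)
  have h : a ≤ ((n + 1 : ℕ) : ℝ≥0∞) * 1 := by
    rw [mul_one]
    exact hn.le.trans (by exact_mod_cast Nat.le_succ n)
  calc rm.smul a 0 ≤ rm.smul (((n + 1 : ℕ) : ℝ≥0∞) * 1) 0 := rm.mono_left ha h 0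
    _ = 0 := by rw [rm.natCast_succ_mul_smul one_pos, rm.one_smul, nsmul_zero]

lemma nsmul_succ_injective (rm : RealMul S) (n : ℕ) :
    Function.Injective fun s : S => (n + 1) • s := by
  have hpos : (0 : ℝ≥0∞) < ((n + 1 : ℕ) : ℝ≥0∞)⁻¹ := by simp [ENNReal.inv_pos]
  refine Function.LeftInverse.injective (g := rm.smul ((n + 1 : ℕ) : ℝ≥0∞)⁻¹) fun s => ?_
  rw [rm.smul_nsmul_succ hpos, ← rm.natCast_succ_mul_smul hpos,
    ENNReal.mul_inv_cancel (by simp) (ENNReal.natCast_ne_top _), rm.one_smul]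

/-- The scalar of `[0,∞]` given by a nonnegative rational number. -/
noncomputable def scalar (q : ℚ≥0) : ℝ≥0∞ := ((q : NNReal) : ℝ≥0∞)

lemma scalar_add (a b : ℚ≥0) : scalar (a + b) = scalar a + scalar b := by simp [scalar]

lemma scalar_mul (a b : ℚ≥0) : scalar (a * b) = scalar a * scalar b := by simp [scalar]

lemma scalar_one : scalar 1 = 1 := by simp [scalar]

lemma scalar_natCast (n : ℕ) : scalar n = n := by simp [scalar]

lemma scalar_pos {a : ℚ≥0} (ha : a ≠ 0) : 0 < scalar a := by
  simpa [scalar, pos_iff_ne_zero] using ha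

lemma scalar_ne_top (a : ℚ≥0) : scalar a ≠ ⊤ := ENNReal.coe_ne_top

lemma scalar_mono : Monotone scalar := fun a b h => by
  simpa [scalar] using h

lemma smul_smul_scalar (rm : RealMul S) {a b : ℚ≥0} (ha : a ≠ 0) (hb : b ≠ 0) (s : S) :
    rm.smul (scalar a) (rm.smul (scalar b) s) = rm.smul (scalar (a * b)) s := by
  obtain ⟨m, hm⟩ := Nat.exists_eq_succ_of_ne_zero b.den_pos.ne'
  obtain ⟨k, hk⟩ := Nat.exists_eq_succ_of_ne_zero (NNRat.num_ne_zero.2 hb)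
  have hmb : ((m + 1 : ℕ) : ℚ≥0) * b = ((k + 1 : ℕ) : ℚ≥0) := by
    have := NNRat.den_mul_eq_num b
    rwa [hm, hk] at this
  have hmb' : ((m + 1 : ℕ) : ℝ≥0∞) * scalar b = ((k + 1 : ℕ) : ℝ≥0∞) * 1 := by
    rw [← scalar_natCast, ← scalar_mul, hmb, scalar_natCast, mul_one]
  apply rm.nsmul_succ_injective m
  dsimp only
  rw [← rm.smul_nsmul_succ (scalar_pos ha), ← rm.natCast_succ_mul_smul (scalar_pos hb), hmb',
    rm.natCast_succ_mul_smul one_pos, rm.one_smul, rm.smul_nsmul_succ (scalar_pos ha),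
    ← rm.natCast_succ_mul_smul (scalar_pos ha),
    ← rm.natCast_succ_mul_smul (scalar_pos (mul_ne_zero ha hb)), scalar_mul, mul_left_comm, hmb',
    mul_one, mul_comm]

/-- The `ℚ≥0`-module structure obtained from real multiplication. -/
noncomputable abbrev nnratModule (rm : RealMul S) (hS : CuO5 S) : Module ℚ≥0 S where
  smul q s := if q = 0 then 0 else rm.smul (scalar q) s
  one_smul s := by
    change (if (1 : ℚ≥0) = 0 then 0 else rm.smul (scalar 1) s) = s
    rw [if_neg one_ne_zero, scalar_one, rm.one_smul]
  mul_smul a b s := by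
    change (if a * b = 0 then 0 else rm.smul (scalar (a * b)) s) =
      if a = 0 then 0 else rm.smul (scalar a) (if b = 0 then 0 else rm.smul (scalar b) s)
    by_cases ha : a = 0
    · simp [ha]
    by_cases hb : b = 0
    · simp [ha, hb, rm.smul_zero_of_ne_top hS (scalar_pos ha) (scalar_ne_top a)]
    · simp [ha, hb, rm.smul_smul_scalar ha hb]
  smul_zero a := by
    change (if a = 0 then 0 else rm.smul (scalar a) 0) = 0
    split_ifs with ha
    · rfl
    · exact rm.smul_zero_of_ne_top hS (scalar_pos ha) (scalar_ne_top a)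
  smul_add a s t := by
    change (if a = 0 then 0 else rm.smul (scalar a) (s + t)) =
      (if a = 0 then 0 else rm.smul (scalar a) s) + if a = 0 then 0 else rm.smul (scalar a) t
    split_ifs with ha
    · rw [add_zero]
    · exact rm.add_right (scalar_pos ha) s t
  add_smul a b s := by
    change (if a + b = 0 then 0 else rm.smul (scalar (a + b)) s) =
      (if a = 0 then 0 else rm.smul (scalar a) s) + if b = 0 then 0 else rm.smul (scalar b) s
    by_cases ha : a = 0
    · simp [ha]
    by_cases hb : b = 0
    · simp [ha, hb]
    · simp [ha, hb, scalar_add, rm.add_left (scalar_pos ha) (scalar_pos hb)]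
  zero_smul s := if_pos rfl

lemma nnratModule_smul (rm : RealMul S) (hS : CuO5 S) {q : ℚ≥0} (hq : q ≠ 0) (s : S) :
    (rm.nnratModule hS).smul q s = rm.smul (scalar q) s := if_neg hq

end RealMul

lemma monotone_succ_div_succ_succ : Monotone fun n : ℕ => ((n + 1) / (n + 2) : ℚ≥0) :=
  monotone_nat_of_le_succ fun n => by
    rw [div_le_div_iff₀ (by positivity) (by positivity), ← NNRat.coe_le_coe]
    push_cast
    nlinarith

lemma RealMul.iSup_scalar_succ_div :
    ⨆ n : ℕ, scalar ((n + 1) / (n + 2) : ℚ≥0) = 1 := by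
  apply iSup_eq_of_tendsto (fun i j hij => scalar_mono (monotone_succ_div_succ_succ hij))
  have h : Filter.Tendsto (fun n : ℕ => ((n + 1 : ℕ) : NNReal) / ((n + 1 : ℕ) + 1))
      Filter.atTop (nhds 1) :=
    (NNReal.tendsto_coe.1 (by
      simpa using (Filter.tendsto_add_atTop_iff_nat 1).2 (tendsto_natCast_div_add_atTop (1 : ℝ))))
  have h' := ENNReal.tendsto_coe.2 h
  refine h'.congr fun n => ?_
  simp only [scalar]
  congr 1
  push_cast
  ring

/-- The order is determined by the scalings with factor less than one. -/
def IsScalingContinuous (S : Type*) [AddCommMonoid S] [PartialOrder S] [Module ℚ≥0 S] : Prop :=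
  ∀ s : S, IsLUB (Set.range fun n : ℕ => ((n + 1) / (n + 2) : ℚ≥0) • s) s

section Scaling

variable {S : Type*} [AddCommMonoid S] [Module ℚ≥0 S]

lemma half_smul_add_half_smul (s : S) : (2⁻¹ : ℚ≥0) • s + (2⁻¹ : ℚ≥0) • s = s := by
  rw [← add_smul, show (2⁻¹ : ℚ≥0) + 2⁻¹ = 1 by norm_num, one_smul]

lemma smul_le_smul_of_le_right [PartialOrder S] [PosSMulMono ℚ≥0 S] (a : ℚ≥0) {s t : S}
    (h : s ≤ t) : a • s ≤ a • t :=
  smul_le_smul_of_nonneg_left h zero_le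

lemma CC.smul [PartialOrder S] [PosSMulMono ℚ≥0 S] {a : ℚ≥0} (ha : a ≠ 0) {s t : S}
    (h : CC s t) : CC (a • s) (a • t) := by
  intro u hu x hx htx
  have hlub : IsLUB (Set.range fun n => a⁻¹ • u n) (a⁻¹ • x) := by
    constructor
    · rintro _ ⟨n, rfl⟩
      exact smul_le_smul_of_le_right _ (hx.1 ⟨n, rfl⟩)
    · intro y hy
      have : x ≤ a • y := hx.2 (by
        rintro _ ⟨n, rfl⟩
        simpa [ha] using smul_le_smul_of_le_right a (hy ⟨n, rfl⟩))
      simpa [ha] using smul_le_smul_of_le_right a⁻¹ this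
  obtain ⟨n, hn⟩ := h _ (fun i j hij => smul_le_smul_of_le_right _ (hu hij)) _ hlub
    (by simpa [ha] using smul_le_smul_of_le_right a⁻¹ htx)
  exact ⟨n, by simpa [ha] using smul_le_smul_of_le_right a hn⟩

variable [PartialOrder S] [IsOrderedAddMonoid S]

lemma smul_le_smul_of_le_left (hS : CuO5 S) {a b : ℚ≥0} (h : a ≤ b) (s : S) : a • s ≤ b • s := by
  obtain ⟨c, rfl⟩ := exists_add_of_le h
  rw [add_smul]
  exact le_add_of_nonneg_right (hS.zeroLe _)

lemma smul_le_self (hS : CuO5 S) {a : ℚ≥0} (h : a ≤ 1) (s : S) : a • s ≤ s := by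
  simpa using smul_le_smul_of_le_left hS h s

lemma CC.exists_le_smul (hS : CuO5 S) (hc : IsScalingContinuous S) {s t : S} (h : CC s t) :
    ∃ a : ℚ≥0, a < 1 ∧ s ≤ a • t := by
  obtain ⟨n, hn⟩ := h _ (fun i j hij =>
    smul_le_smul_of_le_left hS (monotone_succ_div_succ_succ hij) t) t (hc t) le_rfl
  refine ⟨_, ?_, hn⟩
  rw [div_lt_one (by positivity), ← NNRat.coe_lt_coe]
  push_cast
  linarith

/-- Refinement holds up to the factor `a`. -/
def HasRefinementUpTo (S : Type*) [AddCommMonoid S] [PartialOrder S] [Module ℚ≥0 S]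
    (a : ℚ≥0) : Prop :=
  ∀ f' f g₁ g₂ : S, CC f' f → f ≤ g₁ + g₂ →
    ∃ h₁ h₂ : S, a • f' ≤ h₁ + h₂ ∧ h₁ + h₂ ≤ f ∧ h₁ ≤ g₁ ∧ h₂ ≤ g₂

lemma HasRefinementUpTo.anti (hS : CuO5 S) {a b : ℚ≥0} (hab : a ≤ b)
    (hb : HasRefinementUpTo S b) : HasRefinementUpTo S a := by
  intro f' f g₁ g₂ hf hg
  obtain ⟨h₁, h₂, h, h'⟩ := hb f' f g₁ g₂ hf hg
  exact ⟨h₁, h₂, (smul_le_smul_of_le_left hS hab f').trans h, h'⟩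

variable [PosSMulMono ℚ≥0 S]

lemma le_of_add_le_add_of_le_nsmul (hS : CuO5 S) (hc : IsScalingContinuous S) {x y z : S}
    {k : ℕ} (h : x + z ≤ y + z) (hz : z ≤ k • y) : x ≤ y := by
  have key (n : ℕ) : n • x + z ≤ n • y + z := by
    induction n with
    | zero => simp
    | succ n ih =>
      calc (n + 1) • x + z = (n • x + z) + x := by rw [succ_nsmul]; abel
        _ ≤ (n • y + z) + x := by gcongr
        _ = n • y + (x + z) := by abel
        _ ≤ n • y + (y + z) := by gcongr
        _ = (n + 1) • y + z := by rw [succ_nsmul]; abel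
  refine (hc x).2 ?_
  rintro _ ⟨m, rfl⟩
  set n := (m + 1) * (k + 1) with hn
  have h₁ : n • x ≤ (n + k) • y := by
    calc n • x ≤ n • x + z := le_add_of_nonneg_right (hS.zeroLe _)
      _ ≤ n • y + k • y := (key n).trans (by gcongr)
      _ = (n + k) • y := (add_nsmul _ _ _).symm
  have hpos : (n + k : ℕ) ≠ 0 := by positivity
  have h₂ : ((n : ℚ≥0) / (n + k : ℕ)) • x ≤ y := by
    have := smul_le_smul_of_le_right ((n + k : ℕ) : ℚ≥0)⁻¹ h₁
    rw [← Nat.cast_smul_eq_nsmul ℚ≥0, ← Nat.cast_smul_eq_nsmul ℚ≥0, smul_smul, smul_smul,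
      inv_mul_cancel₀ (by exact_mod_cast hpos), one_smul] at this
    rwa [div_eq_inv_mul]
  refine (smul_le_smul_of_le_left hS ?_ x).trans h₂
  rw [div_le_div_iff₀ (by positivity) (by positivity)]
  norm_cast
  rw [hn]
  nlinarith

/-- Between `s' ≪ s` there are `p ≪ q` whose difference is a small multiple of `s`. -/
lemma exists_CC_le_add_smul (hS : CuO5 S) {s' s : S} (h : CC s' s) {N : ℕ} (hN : N ≠ 0) :
    ∃ p q : S, s' ≤ p ∧ CC p q ∧ q ≤ s ∧ q ≤ p + (N : ℚ≥0)⁻¹ • s := by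
  obtain ⟨u, hu0, hu, hus⟩ := hS.exists_rapid_above h
  have hN' : (N : ℚ≥0) ≠ 0 := by exact_mod_cast hN
  have hmono := monotone_of_forall_CC hu
  have average (t : S) : (N : ℚ≥0)⁻¹ • (N • t) = t := by
    rw [← Nat.cast_smul_eq_nsmul ℚ≥0, smul_smul, inv_mul_cancel₀ hN', one_smul]
  refine ⟨(N : ℚ≥0)⁻¹ • ∑ i ∈ Finset.range N, u i,
    (N : ℚ≥0)⁻¹ • ∑ i ∈ Finset.range N, u (i + 1), ?_, ?_, ?_, ?_⟩
  · rw [← average s']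
    refine smul_le_smul_of_le_right _ ?_
    simpa using Finset.card_nsmul_le_sum (Finset.range N) u s'
      fun i _ => hu0.trans (hmono i.zero_le)
  · exact (hS.CC_sum hu N).smul (inv_ne_zero hN')
  · conv_rhs => rw [← average s]
    refine smul_le_smul_of_le_right _ ?_
    simpa using Finset.sum_le_card_nsmul (Finset.range N) (fun i => u (i + 1)) s
      fun i _ => (hus (i + 1)).le
  · rw [← smul_add]
    refine smul_le_smul_of_le_right _ ?_
    calc ∑ i ∈ Finset.range N, u (i + 1)
        ≤ ∑ i ∈ Finset.range N, u (i + 1) + u 0 := le_add_of_nonneg_right (hS.zeroLe _)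
      _ = ∑ i ∈ Finset.range N, u i + u N := by
        rw [← Finset.sum_range_succ', Finset.sum_range_succ]
      _ ≤ _ := by gcongr; exact (hus N).le

/-- An almost exact complement that dominates a multiple of the whole element. -/
lemma exists_almost_complement (hS : CuO5 S) (hc : IsScalingContinuous S) {p q t : S}
    {d e : ℚ≥0} (hde : d + e = 1) (hpq : CC p q) (hqt : q ≤ t) (hq : q ≤ p + e • t) :
    ∃ w, d • p + w ≤ t ∧ (d * d) • t ≤ d • p + w ∧ e • t ≤ w := by
  obtain ⟨w, hw₁, hw₂⟩ := hS.O5 hpq hqt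
  have split (x : S) : d • x + e • x = x := by rw [← add_smul, hde, one_smul]
  have hd : d ≤ 1 := hde ▸ le_self_add
  refine ⟨d • w + e • t, ?_, ?_, le_add_of_nonneg_left (hS.zeroLe _)⟩
  · calc d • p + (d • w + e • t) = d • (p + w) + e • t := by module
      _ ≤ d • t + e • t := by gcongr
      _ = t := split t
  · have hcancel : d • t ≤ p + w + e • t := by
      refine le_of_add_le_add_of_le_nsmul hS hc (z := e • t) (k := 1) ?_ ?_
      · calc d • t + e • t = t := split t
          _ ≤ q + w := hw₂
          _ ≤ p + e • t + w := by gcongr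
          _ = p + w + e • t := by abel
          _ ≤ _ := le_add_of_nonneg_right (hS.zeroLe _)
      · rw [one_nsmul]
        exact le_add_of_nonneg_left (hS.zeroLe _)
    calc (d * d) • t = d • d • t := mul_smul _ _ _
      _ ≤ d • (p + w + e • t) := smul_le_smul_of_le_right d hcancel
      _ = d • p + (d • w + d • e • t) := by module
      _ ≤ _ := by gcongr; exact smul_le_self hS hd _

lemma half_smul_add_le {r t f : S} (hr : r ≤ f) (ht : t ≤ f) :
    (2⁻¹ : ℚ≥0) • (r + t) ≤ f := by
  rw [smul_add]
  calc (2⁻¹ : ℚ≥0) • r + (2⁻¹ : ℚ≥0) • t ≤ (2⁻¹ : ℚ≥0) • f + (2⁻¹ : ℚ≥0) • f := by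
        gcongr
    _ = f := half_smul_add_half_smul f

lemma hasRefinementUpTo_half (hS : CuO6 S) : HasRefinementUpTo S 2⁻¹ := by
  intro f' f g₁ g₂ hf hg
  obtain ⟨r, t, hrt, hr, hrf, ht, htf⟩ := hS.O6 hg hf
  have half_le (s : S) : (2⁻¹ : ℚ≥0) • s ≤ s := smul_le_self hS.toCuO5 (by norm_num) s
  refine ⟨(2⁻¹ : ℚ≥0) • r, (2⁻¹ : ℚ≥0) • t, ?_, ?_, (half_le r).trans hr, (half_le t).trans ht⟩
  · rw [← smul_add]
    exact smul_le_smul_of_le_right _ hrt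
  · rw [← smul_add]
    exact half_smul_add_le hrf htf

lemma HasRefinementUpTo.improve (hS : CuO6 S) (hc : IsScalingContinuous S) {a a' d : ℚ≥0}
    {N : ℕ} (hN : N ≠ 0) (hd : d ≠ 0) (hde : d + (N : ℚ≥0)⁻¹ = 1) (haa : a + a' = 1)
    (ha : HasRefinementUpTo S a) :
    HasRefinementUpTo S (d * d * (a' * (d * 2⁻¹) + a * (d * d))) := by
  intro f' f g₁ g₂ hf hg
  have hS5 := hS.toCuO5
  have hN' : (N : ℚ≥0) ≠ 0 := by exact_mod_cast hN
  have hd1 : d ≤ 1 := hde ▸ le_self_add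
  obtain ⟨f₁, hf₁, hf₁f⟩ := hS5.exists_between hf
  obtain ⟨f₂, hf₂, hf₂f⟩ := hS5.exists_between hf₁f
  obtain ⟨r, t, hrt, hrg, hrf, htg, htf⟩ := hS.O6 hg hf₂f
  obtain ⟨r', t', hr', ht', hrt'⟩ := hS5.exists_le_add_of_CC (hf₂.trans_le hrt)
  obtain ⟨p₁, q₁, hp₁, hpq₁, hq₁, hqp₁⟩ := exists_CC_le_add_smul hS5 hr' hN
  obtain ⟨p₂, q₂, hp₂, hpq₂, hq₂, hqp₂⟩ := exists_CC_le_add_smul hS5 ht' hN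
  set e : ℚ≥0 := (N : ℚ≥0)⁻¹ with he
  have half_ne : (2⁻¹ : ℚ≥0) ≠ 0 := by norm_num
  have half_le (s : S) : (2⁻¹ : ℚ≥0) • s ≤ s := smul_le_self hS5 (by norm_num) s
  have halve {p q r g : S} (h : q ≤ p + e • r) (hrg : r ≤ g) :
      (2⁻¹ : ℚ≥0) • q ≤ (2⁻¹ : ℚ≥0) • p + e • g := by
    calc (2⁻¹ : ℚ≥0) • q ≤ (2⁻¹ : ℚ≥0) • (p + e • r) := smul_le_smul_of_le_right _ h
      _ = (2⁻¹ : ℚ≥0) • p + (2⁻¹ : ℚ≥0) • (e • r) := smul_add _ _ _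
      _ ≤ _ := by
        gcongr
        exact (half_le _).trans (smul_le_smul_of_le_right _ hrg)
  obtain ⟨u, hu₁, hu₂, hu₃⟩ := exists_almost_complement hS5 hc hde (hpq₁.smul half_ne)
    ((half_le _).trans (hq₁.trans hrg)) (halve hqp₁ hrg)
  obtain ⟨v, hv₁, hv₂, hv₃⟩ := exists_almost_complement hS5 hc hde (hpq₂.smul half_ne)
    ((half_le _).trans (hq₂.trans htg)) (halve hqp₂ htg)
  have hqf : (2⁻¹ : ℚ≥0) • (q₁ + q₂) ≤ (2⁻¹ : ℚ≥0) • (p₁ + p₂) + e • f := by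
    calc (2⁻¹ : ℚ≥0) • (q₁ + q₂) ≤ (2⁻¹ : ℚ≥0) • ((p₁ + e • r) + (p₂ + e • t)) :=
          smul_le_smul_of_le_right _ (add_le_add hqp₁ hqp₂)
      _ = (2⁻¹ : ℚ≥0) • (p₁ + p₂) + e • ((2⁻¹ : ℚ≥0) • (r + t)) := by module
      _ ≤ _ := by
        gcongr
        exact half_smul_add_le hrf htf
  obtain ⟨c, hc₁, hc₂, -⟩ := exists_almost_complement hS5 hc hde
    ((hS5.O3 hpq₁ hpq₂).smul half_ne) (half_smul_add_le (hq₁.trans hrf) (hq₂.trans htf)) hqf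
  set A := d • (2⁻¹ : ℚ≥0) • p₁ with hA
  set B := d • (2⁻¹ : ℚ≥0) • p₂ with hB
  have hAB : d • (2⁻¹ : ℚ≥0) • (p₁ + p₂) = A + B := by rw [hA, hB]; module
  rw [hAB] at hc₁ hc₂
  set κ := d * d with hκ
  have hκ0 : κ ≠ 0 := mul_ne_zero hd hd
  obtain ⟨η, hη⟩ := exists_add_of_le (show κ ≤ 1 from mul_le_one' hd1 hd1)
  have split (x : S) : x = κ • x + η • x := by rw [← add_smul, ← hη, one_smul]
  have splita (x : S) : x = a • x + a' • x := by rw [← add_smul, haa, one_smul]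
  -- cancelling `κ • (A + B)` bounds the remainder by what is left of `g₁` and `g₂`
  have hcuv : κ • c ≤ (η • A + u) + (η • B + v) := by
    refine le_of_add_le_add_of_le_nsmul hS5 hc (z := κ • (A + B)) (k := N) ?_ ?_
    · calc κ • c + κ • (A + B) = κ • (A + B + c) := by module
        _ ≤ κ • (g₁ + g₂) := smul_le_smul_of_le_right _ (hc₁.trans hg)
        _ = κ • g₁ + κ • g₂ := smul_add _ _ _
        _ ≤ (A + u) + (B + v) := add_le_add hu₂ hv₂
        _ = ((κ • A + η • A) + u) + ((κ • B + η • B) + v) := by rw [← split, ← split]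
        _ = _ := by module
    · have hAg : A ≤ g₁ := (le_add_of_nonneg_right (hS5.zeroLe _)).trans hu₁
      have hBg : B ≤ g₂ := (le_add_of_nonneg_right (hS5.zeroLe _)).trans hv₁
      calc κ • (A + B) ≤ A + B := smul_le_self hS5 (mul_le_one' hd1 hd1) _
        _ ≤ g₁ + g₂ := add_le_add hAg hBg
        _ = N • (e • g₁ + e • g₂) := by
          rw [← Nat.cast_smul_eq_nsmul ℚ≥0, ← smul_add, smul_smul, he, mul_inv_cancel₀ hN',
            one_smul]
        _ ≤ N • ((η • A + u) + (η • B + v)) := by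
          gcongr
          · exact hu₃.trans (le_add_of_nonneg_left (hS5.zeroLe _))
          · exact hv₃.trans (le_add_of_nonneg_left (hS5.zeroLe _))
  obtain ⟨x, c', hx, hc', hxc⟩ := hS5.exists_le_add_of_CC ((hf.smul hκ0).trans_le hc₂)
  obtain ⟨h₁, h₂, hh₁, hh₂, hh₃, hh₄⟩ := ha _ _ _ _ (hc'.smul hκ0) hcuv
  have lower₁ : κ • f' ≤ A + B + c' := hxc.trans (by gcongr; exact hx.le)
  have lower₂ : (d * 2⁻¹) • f' ≤ A + B := by
    rw [← hAB, mul_smul]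
    refine smul_le_smul_of_le_right _ (smul_le_smul_of_le_right _ ?_)
    exact hf₁.le.trans (hrt'.trans (add_le_add hp₁ hp₂))
  refine ⟨κ • A + h₁, κ • B + h₂, ?_, ?_, ?_, ?_⟩
  · calc (κ * (a' * (d * 2⁻¹) + a * κ)) • f'
        = κ • (a' • (d * 2⁻¹) • f' + a • κ • f') := by module
      _ ≤ κ • (a' • (A + B) + a • (A + B + c')) :=
        smul_le_smul_of_le_right _ (add_le_add (smul_le_smul_of_le_right _ lower₂)
          (smul_le_smul_of_le_right _ lower₁))
      _ = κ • (a • (A + B) + a' • (A + B)) + a • κ • c' := by module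
      _ = κ • (A + B) + a • κ • c' := by rw [← splita]
      _ ≤ κ • (A + B) + (h₁ + h₂) := by gcongr
      _ = _ := by module
  · calc κ • A + h₁ + (κ • B + h₂) = κ • (A + B) + (h₁ + h₂) := by module
      _ ≤ κ • (A + B) + κ • c := by gcongr
      _ = κ • (A + B + c) := (smul_add _ _ _).symm
      _ ≤ A + B + c := smul_le_self hS5 (mul_le_one' hd1 hd1) _
      _ ≤ f := hc₁
  · calc κ • A + h₁ ≤ κ • A + (η • A + u) := by gcongr
      _ = A + u := by rw [← add_assoc, ← split]
      _ ≤ g₁ := hu₁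
  · calc κ • B + h₂ ≤ κ • B + (η • B + v) := by gcongr
      _ = B + v := by rw [← add_assoc, ← split]
      _ ≤ g₂ := hv₁

lemma exists_le_improved_factor {a a' : ℚ≥0} (ha' : a' ≠ 0) (haa : a + a' = 1) :
    ∃ (N : ℕ) (d : ℚ≥0), N ≠ 0 ∧ d ≠ 0 ∧ d + (N : ℚ≥0)⁻¹ = 1 ∧
      a + a' / 3 ≤ d * d * (a' * (d * 2⁻¹) + a * (d * d)) := by
  obtain ⟨N, hN⟩ := exists_nat_gt (24 / a')
  have hN0 : (0 : ℚ≥0) < N := zero_le.trans_lt hN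
  have hNa : 24 < N * a' := (div_lt_iff₀ (pos_iff_ne_zero.2 ha')).1 hN
  have ha'1 : a' ≤ 1 := haa ▸ le_add_self
  have hN1 : (1 : ℚ≥0) < N := by
    have : N * a' ≤ N * 1 := mul_le_mul_right ha'1 _
    rw [mul_one] at this
    exact (by norm_num : (1 : ℚ≥0) < 24).trans (hNa.trans_le this)
  obtain ⟨d, hd⟩ := exists_add_of_le (inv_le_one_of_one_le₀ hN1.le)
  have hd0 : d ≠ 0 := by
    rintro rfl
    rw [add_zero] at hd
    exact (inv_lt_one_of_one_lt₀ hN1).ne' hd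
  refine ⟨N, d, by rintro rfl; simp at hN0, hd0, by rw [hd, add_comm], ?_⟩
  have he : 24 * (N : ℚ≥0)⁻¹ < a' := by
    rwa [← div_eq_mul_inv, div_lt_iff₀ hN0, mul_comm a']
  generalize (N : ℚ≥0)⁻¹ = e at he hd
  rw [← NNRat.coe_le_coe]
  rw [← NNRat.coe_lt_coe] at he
  rw [← NNRat.coe_inj] at haa hd
  push_cast at *
  have h1 : (0 : ℚ) ≤ e := e.2
  have h2 : (0 : ℚ) ≤ a := a.2
  have h3 : (0 : ℚ) ≤ a' := a'.2
  have h4 : (0 : ℚ) ≤ d := d.2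
  generalize (e : ℚ) = e at *
  generalize (a : ℚ) = a at *
  generalize (a' : ℚ) = a' at *
  generalize (d : ℚ) = d at *
  obtain rfl : d = 1 - e := by linarith
  obtain rfl : a = 1 - a' := by linarith
  have hsq : 1 - 2 * e ≤ (1 - e) * (1 - e) := by nlinarith
  have hsq1 : (1 - e) * (1 - e) ≤ 1 - e := by nlinarith
  have hquad : 1 - 4 * e ≤ (1 - e) * (1 - e) * ((1 - e) * (1 - e)) := by
    nlinarith [mul_self_nonneg ((1 - e) * (1 - e) - 1)]
  have hlow : ((1 - e) * (1 - e)) * ((1 - a' / 2) * ((1 - e) * (1 - e))) ≤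
      (1 - e) * (1 - e) * (a' * ((1 - e) * 2⁻¹) + (1 - a') * ((1 - e) * (1 - e))) := by
    refine mul_le_mul_of_nonneg_left ?_ (by positivity)
    nlinarith
  nlinarith

lemma hasRefinementUpTo_of_lt_one (hS : CuO6 S) (hc : IsScalingContinuous S) {b : ℚ≥0}
    (hb : b < 1) : HasRefinementUpTo S b := by
  have key (n : ℕ) : ∃ a : ℚ≥0, a + 2⁻¹ * (2 / 3) ^ n = 1 ∧ HasRefinementUpTo S a := by
    induction n with
    | zero => exact ⟨2⁻¹, by norm_num, hasRefinementUpTo_half hS⟩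
    | succ n ih =>
      obtain ⟨a, haa, ha⟩ := ih
      obtain ⟨N, d, hN, hd, hde, hle⟩ := exists_le_improved_factor (by positivity) haa
      refine ⟨_, ?_, (ha.improve hS hc hN hd hde haa).anti hS.toCuO5 hle⟩
      rw [← haa]
      ring
  obtain ⟨ε, hε⟩ := exists_add_of_le hb.le
  have hε0 : 0 < ε := by
    rw [pos_iff_ne_zero]
    rintro rfl
    simp [hb.ne'] at hε
  obtain ⟨n, hn⟩ := exists_pow_lt_of_lt_one hε0
    (show (2 / 3 : ℚ≥0) < 1 by rw [div_lt_one (by norm_num)]; norm_num)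
  obtain ⟨a, haa, ha⟩ := key n
  refine ha.anti hS.toCuO5 ?_
  have hle : 2⁻¹ * (2 / 3 : ℚ≥0) ^ n ≤ ε :=
    (mul_le_of_le_one_left zero_le (by norm_num)).trans hn.le
  refine le_of_add_le_add_right (a := ε) ?_
  rw [← hε, ← haa]
  gcongr

end Scaling

/-- the basic case of the refinement property. -/
theorem refinement_two {S : Type*} [AddCommMonoid S] [PartialOrder S]
    (hS : CuO6 S) (rm : RealMul S) (f' f g₁ g₂ : S)
    (h₁ : CC f' f) (h₂ : f ≤ g₁ + g₂) :
    ∃ h₁ h₂ : S, CC f' (h₁ + h₂) ∧ CC (h₁ + h₂) f ∧ h₁ ≤ g₁ ∧ h₂ ≤ g₂ := by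
  have hS5 := hS.toCuO5
  let _ := rm.nnratModule hS5
  have hsmul {q : ℚ≥0} (hq : q ≠ 0) (s : S) : q • s = rm.smul (RealMul.scalar q) s :=
    rm.nnratModule_smul hS5 hq s
  have : IsOrderedAddMonoid S := {
    add_le_add_left := fun a b h c => hS5.addRightMono h c }
  have : PosSMulMono ℚ≥0 S := ⟨fun q _ s t hst => by
    rcases eq_or_ne q 0 with rfl | hq
    · simp
    · rw [hsmul hq, hsmul hq]
      exact rm.mono_right (RealMul.scalar_pos hq) hst⟩
  have hc : IsScalingContinuous S := fun s => by
    have hne (n : ℕ) : ((n + 1) / (n + 2) : ℚ≥0) ≠ 0 := by positivity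
    have := rm.sup_left (fun n : ℕ => RealMul.scalar ((n + 1) / (n + 2) : ℚ≥0))
      (fun i j hij => RealMul.scalar_mono (monotone_succ_div_succ_succ hij))
      (RealMul.scalar_pos (hne 0)) s
    rw [RealMul.iSup_scalar_succ_div, rm.one_smul] at this
    simpa only [hsmul (hne _)] using this
  obtain ⟨f₁, hf₁, hf₁f⟩ := hS5.exists_between h₁
  obtain ⟨f₂, hf₂, hf₂f⟩ := hS5.exists_between hf₁f
  obtain ⟨f₃, hf₃, hf₃f⟩ := hS5.exists_between hf₂f
  obtain ⟨a, ha, hfa⟩ := hf₂.exists_le_smul hS5 hc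
  obtain ⟨k₁, k₂, hk, hkf, hk₁, hk₂⟩ :=
    hasRefinementUpTo_of_lt_one hS hc ha f₂ f₃ g₁ g₂ hf₃ (hf₃f.le.trans h₂)
  exact ⟨k₁, k₂, hf₁.trans_le (hfa.trans hk), CC.of_le hkf hf₃f, hk₁, hk₂⟩
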